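/- Suppose f ∈ H¹(I,ℝⁿ) with derivative f', let u_ε be the minimizer of E_ε over H¹(I,ℝⁿ) with derivative u_ε', and let p ∈ [1,2]. Then ∫_I |u_ε'|_ε^{p−2} ‖u_ε'‖² ≤ ∫_I |u_ε'|_ε^{p−2} (u_ε' · f'), and consequently ∫_I |u_ε'|_ε^{p−2} ‖u_ε'‖² ≤ ((p−1)/p) ∫_I |u_ε'|_ε^p + (1/p) ∫_I ‖f'‖^p. -/

import Mathlib

open MeasureTheory Set Filter
open scoped ENNReal

noncomputable section

/-- Square-integrability of `w` on the set `S`. -/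
def SqIntOn {n : ℕ} (w : ℝ → EuclideanSpace ℝ (Fin n)) (S : Set ℝ) : Prop :=
  MeasureTheory.IntegrableOn (fun x => ‖w x‖ ^ 2) S

/-- `w` belongs to `H¹(I, ℝⁿ)` with (weak) derivative `w'`: it is continuous on `[a,b]`,
`w'` is square-integrable on `I = Ioo a b`, and the fundamental theorem of calculus holds. -/
def InH1 {n : ℕ} (a b : ℝ) (w w' : ℝ → EuclideanSpace ℝ (Fin n)) : Prop :=
  ContinuousOn w (Set.Icc a b) ∧
  MeasureTheory.IntegrableOn (fun x => ‖w' x‖ ^ 2) (Set.Ioo a b) ∧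
  ∀ x ∈ Set.Icc a b, ∀ y ∈ Set.Icc a b, w y - w x = ∫ t in x..y, w' t

/-- The regularized energy `E_ε` evaluated at `w ∈ H¹` with derivative `w'`. -/
def regEnergy {n : ℕ} (lam ε a b : ℝ) (f w w' : ℝ → EuclideanSpace ℝ (Fin n)) : ℝ :=
  ∫ x in Set.Ioo a b, ((1 / (2 * lam)) * ‖w x - f x‖ ^ 2
    + Real.sqrt (‖w' x‖ ^ 2 + ε ^ 2) + (ε ^ 2 / 2) * ‖w' x‖ ^ 2)

/-- `u` (with derivative `u'`) minimizes `E_ε` over `H¹(I, ℝⁿ)`. -/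
def IsMinimizerEps {n : ℕ} (lam ε a b : ℝ) (f u u' : ℝ → EuclideanSpace ℝ (Fin n)) : Prop :=
  InH1 a b u u' ∧ ∀ v v' : ℝ → EuclideanSpace ℝ (Fin n), InH1 a b v v' →
    regEnergy lam ε a b f u u' ≤ regEnergy lam ε a b f v v'

/-!
Write `F v = v / |v|_ε + ε² v`, `P v = |v|_ε ^ (p - 2) v` and `W x = ∫ₐˣ λ⁻¹ (u - f)`. Testing the
Euler–Lagrange equation with a primitive of `F u' - W` gives `F u' = W` almost everywhere and
`W a = W b = 0`. The map `F` is a strongly monotone bijection and `P = G ∘ F` with `G` monotone,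
locally Lipschitz and `G 0 = 0`. As `W'' = λ⁻¹ (u' - f')`, integration by parts yields
`∫ ⟪P u', u' - f'⟫ = λ ∫ ⟪G W, W''⟫ = -λ ∫ ⟪(G W)', W'⟫ ≤ 0`, the sign because `G` is monotone.
The second estimate then follows from the Cauchy–Schwarz and Young inequalities.
-/

open scoped RealInnerProductSpace

section RegularizedNorm

variable {E : Type*} [NormedAddCommGroup E] {ε : ℝ}

/-- The regularized norm `|v|_ε = √(‖v‖² + ε²)`. -/
def regNorm (ε : ℝ) (v : E) : ℝ := √(‖v‖ ^ 2 + ε ^ 2)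

theorem regNorm_sq (ε : ℝ) (v : E) : regNorm ε v ^ 2 = ‖v‖ ^ 2 + ε ^ 2 :=
  Real.sq_sqrt (by positivity)

theorem regNorm_pos (hε : 0 < ε) (v : E) : 0 < regNorm ε v :=
  Real.sqrt_pos.2 (by positivity)

theorem norm_le_regNorm (ε : ℝ) (v : E) : ‖v‖ ≤ regNorm ε v :=
  Real.le_sqrt_of_sq_le (le_add_of_nonneg_right (sq_nonneg ε))

theorem le_regNorm (ε : ℝ) (v : E) : ε ≤ regNorm ε v :=
  Real.le_sqrt_of_sq_le (le_add_of_nonneg_left (sq_nonneg ‖v‖))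

end RegularizedNorm

section Flux

variable {E : Type*} [NormedAddCommGroup E] [NormedSpace ℝ E] {ε : ℝ}

/-- The gradient `|v|_ε ^ (p - 2) v` of the map `v ↦ |v|_ε ^ p / p`. -/
def powFlux (ε p : ℝ) (v : E) : E := regNorm ε v ^ (p - 2) • v

/-- The gradient of the map `v ↦ |v|_ε + (ε² / 2) ‖v‖²`, the part of the energy density that
depends on the derivative. -/
def energyFlux (ε : ℝ) (v : E) : E := powFlux ε 1 v + ε ^ 2 • v

theorem powFlux_zero (ε p : ℝ) : powFlux ε p (0 : E) = 0 := smul_zero _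

theorem energyFlux_zero (ε : ℝ) : energyFlux ε (0 : E) = 0 := by
  simp [energyFlux, powFlux_zero]

theorem norm_powFlux_one_le (hε : 0 < ε) (v : E) : ‖powFlux ε 1 v‖ ≤ 1 := by
  have hpos := regNorm_pos hε v
  have hexp : (1 : ℝ) - 2 = -1 := by norm_num
  rw [powFlux, hexp, Real.rpow_neg_one, norm_smul, norm_inv, Real.norm_of_nonneg hpos.le]
  exact inv_mul_le_one_of_le₀ (norm_le_regNorm ε v) hpos.le

end Flux

section Regularity

variable {V : Type*} [NormedAddCommGroup V] [InnerProductSpace ℝ V] {ε : ℝ}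

theorem contDiff_regNorm (hε : 0 < ε) : ContDiff ℝ 1 (regNorm ε : V → ℝ) :=
  ((contDiff_norm_sq ℝ).add contDiff_const).sqrt fun _ => by positivity

theorem contDiff_powFlux (hε : 0 < ε) (p : ℝ) : ContDiff ℝ 1 (powFlux ε p : V → V) :=
  ((contDiff_regNorm hε).rpow_const_of_ne fun v => (regNorm_pos hε v).ne').smul contDiff_id

theorem norm_add_smul_sq (v k : V) (t : ℝ) :
    ‖v + t • k‖ ^ 2 = ‖v‖ ^ 2 + 2 * t * ⟪v, k⟫ + t ^ 2 * ‖k‖ ^ 2 := by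
  rw [norm_add_sq_real, real_inner_smul_right, norm_smul, mul_pow, Real.norm_eq_abs, sq_abs]
  ring

-- AM-GM in the form `B ≤ (A² + B²) / (2A)` linearizes the square root.
theorem regNorm_add_smul_le (hε : 0 < ε) (v k : V) (t : ℝ) :
    regNorm ε (v + t • k) ≤
      regNorm ε v + t * ⟪powFlux ε 1 v, k⟫ + t ^ 2 * (1 / (2 * ε) * ‖k‖ ^ 2) := by
  have hA := regNorm_pos hε v
  have hAε := le_regNorm ε v
  have hA2 := regNorm_sq ε v
  have hB2 : regNorm ε (v + t • k) ^ 2 =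
      regNorm ε v ^ 2 + (2 * t * ⟪v, k⟫ + t ^ 2 * ‖k‖ ^ 2) := by
    rw [regNorm_sq, regNorm_sq, norm_add_smul_sq]
    ring
  have hexp : (1 : ℝ) - 2 = -1 := by norm_num
  rw [powFlux, hexp, Real.rpow_neg_one, real_inner_smul_left]
  generalize regNorm ε v = A at *
  generalize regNorm ε (v + t • k) = B at *
  calc B ≤ (A ^ 2 + B ^ 2) / (2 * A) := by
        rw [le_div_iff₀ (by positivity)]
        linarith [two_mul_le_add_sq A B]
    _ = A + t * (A⁻¹ * ⟪v, k⟫) + t ^ 2 * (1 / (2 * A) * ‖k‖ ^ 2) := by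
        rw [hB2]
        field_simp
        ring
    _ ≤ _ := by gcongr

theorem inner_powFlux_le {p : ℝ} (hε : 0 < ε) (hp : 1 ≤ p) (v w : V) :
    ⟪powFlux ε p v, w⟫ ≤ (p - 1) / p * regNorm ε v ^ p + 1 / p * ‖w‖ ^ p := by
  have hv := regNorm_pos hε v
  have hp0 : 0 < p := by linarith
  have hyoung := Real.geom_mean_le_arith_mean2_weighted (w₁ := (p - 1) / p) (w₂ := 1 / p)
    (p₁ := regNorm ε v ^ p) (p₂ := ‖w‖ ^ p) (div_nonneg (by linarith) hp0.le) (by positivity)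
    (by positivity) (by positivity) (by field_simp; ring)
  rw [← Real.rpow_mul hv.le, ← Real.rpow_mul (norm_nonneg w), mul_div_cancel₀ _ hp0.ne',
    mul_div_cancel₀ _ hp0.ne', Real.rpow_one] at hyoung
  calc ⟪powFlux ε p v, w⟫ = regNorm ε v ^ (p - 2) * ⟪v, w⟫ := real_inner_smul_left _ _ _
    _ ≤ regNorm ε v ^ (p - 2) * (regNorm ε v * ‖w‖) := by
      gcongr
      exact (real_inner_le_norm v w).trans (by gcongr; exact norm_le_regNorm ε v)
    _ = regNorm ε v ^ (p - 1) * ‖w‖ := by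
      rw [← mul_assoc, ← Real.rpow_add_one hv.ne']
      ring_nf
    _ ≤ _ := hyoung

end Regularity

section Monotonicity

variable {V : Type*} [NormedAddCommGroup V] [InnerProductSpace ℝ V] {ε p : ℝ}

theorem inner_radial_sub_radial_nonneg {φ ψ : ℝ → ℝ} (hφ : ∀ r, 0 ≤ φ r) (hψ : ∀ r, 0 ≤ ψ r)
    (hφm : MonotoneOn (fun r => φ r * r) (Ici 0)) (hψm : MonotoneOn (fun r => ψ r * r) (Ici 0))
    (v w : V) :
    0 ≤ ⟪φ ‖v‖ • v - φ ‖w‖ • w, ψ ‖v‖ • v - ψ ‖w‖ • w⟫ := by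
  have hradii : 0 ≤ (φ ‖v‖ * ‖v‖ - φ ‖w‖ * ‖w‖) * (ψ ‖v‖ * ‖v‖ - ψ ‖w‖ * ‖w‖) :=
    (hφm.monovaryOn hψm).sub_mul_sub_nonneg (norm_nonneg w) (norm_nonneg v)
  have hcross : 0 ≤ φ ‖v‖ * ψ ‖w‖ + φ ‖w‖ * ψ ‖v‖ :=
    add_nonneg (mul_nonneg (hφ _) (hψ _)) (mul_nonneg (hφ _) (hψ _))
  simp only [inner_sub_left, inner_sub_right, real_inner_smul_left, real_inner_smul_right,
    real_inner_self_eq_norm_sq, real_inner_comm v w]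
  linarith [mul_le_mul_of_nonneg_left (real_inner_le_norm v w) hcross, real_inner_comm v w]

theorem monotoneOn_div_sqrt_sq_add_sq (hε : 0 < ε) :
    MonotoneOn (fun r : ℝ => r / √(r ^ 2 + ε ^ 2)) (Ici 0) := by
  intro s hs t ht hst
  rw [mem_Ici] at hs ht
  dsimp only
  rw [div_le_div_iff₀ (by positivity) (by positivity)]
  refine le_of_sq_le_sq ?_ (by positivity)
  rw [mul_pow, mul_pow, Real.sq_sqrt (by positivity), Real.sq_sqrt (by positivity), mul_add,
    mul_add, mul_comm (t ^ 2)]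
  gcongr

theorem monotoneOn_sqrt_sq_add_sq_rpow_mul (hε : 0 < ε) (hp : 1 ≤ p) :
    MonotoneOn (fun r : ℝ => √(r ^ 2 + ε ^ 2) ^ (p - 2) * r) (Ici 0) := by
  have hfactor (r : ℝ) : √(r ^ 2 + ε ^ 2) ^ (p - 2) * r =
      √(r ^ 2 + ε ^ 2) ^ (p - 1) * (r / √(r ^ 2 + ε ^ 2)) := by
    have hpos : 0 < √(r ^ 2 + ε ^ 2) := by positivity
    rw [show p - 2 = p - 1 - 1 by ring, Real.rpow_sub_one hpos.ne']
    ring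
  intro s hs t ht hst
  have hmono := monotoneOn_div_sqrt_sq_add_sq hε hs ht hst
  rw [mem_Ici] at hs ht
  simp only [hfactor] at hmono ⊢
  gcongr

theorem monotoneOn_energyFlux_profile (hε : 0 < ε) :
    MonotoneOn (fun r : ℝ => (√(r ^ 2 + ε ^ 2) ^ ((1 : ℝ) - 2) + ε ^ 2) * r) (Ici 0) := by
  simp only [add_mul]
  exact (monotoneOn_sqrt_sq_add_sq_rpow_mul hε le_rfl).add
    ((monotone_id.const_mul (sq_nonneg ε)).monotoneOn _)

theorem inner_powFlux_sub_energyFlux_sub_nonneg (hε : 0 < ε) (hp : 1 ≤ p) (v w : V) :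
    0 ≤ ⟪powFlux ε p v - powFlux ε p w, energyFlux ε v - energyFlux ε w⟫ := by
  simp only [energyFlux, powFlux, ← add_smul]
  exact inner_radial_sub_radial_nonneg (fun r => by positivity) (fun r => by positivity)
    (monotoneOn_sqrt_sq_add_sq_rpow_mul hε hp) (monotoneOn_energyFlux_profile hε) v w

theorem inner_powFlux_sub_sub_nonneg (hε : 0 < ε) (hp : 1 ≤ p) (v w : V) :
    0 ≤ ⟪powFlux ε p v - powFlux ε p w, v - w⟫ := by
  simpa only [powFlux, regNorm, one_smul] using
    inner_radial_sub_radial_nonneg (ψ := fun _ => 1) (fun r => by positivity)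
      (fun _ => zero_le_one) (monotoneOn_sqrt_sq_add_sq_rpow_mul hε hp)
      (fun s _ t _ hst => by simpa only [one_mul] using hst) v w

theorem sq_mul_norm_sub_le_norm_energyFlux_sub (hε : 0 < ε) (v w : V) :
    ε ^ 2 * ‖v - w‖ ≤ ‖energyFlux ε v - energyFlux ε w‖ := by
  have hstrong : ε ^ 2 * ‖v - w‖ ^ 2 ≤ ⟪energyFlux ε v - energyFlux ε w, v - w⟫ := by
    have hsplit : energyFlux ε v - energyFlux ε w =
        (powFlux ε 1 v - powFlux ε 1 w) + ε ^ 2 • (v - w) := by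
      simp only [energyFlux]
      module
    rw [hsplit, inner_add_left, real_inner_smul_left, real_inner_self_eq_norm_sq]
    linarith [inner_powFlux_sub_sub_nonneg hε le_rfl v w]
  obtain h | h := (norm_nonneg (v - w)).eq_or_lt
  · simp [← h]
  · refine le_of_mul_le_mul_right ?_ h
    linarith [real_inner_le_norm (energyFlux ε v - energyFlux ε w) (v - w)]

theorem antilipschitzWith_energyFlux (hε : 0 < ε) :
    AntilipschitzWith (Real.toNNReal (ε ^ 2)⁻¹) (energyFlux ε : V → V) :=
  AntilipschitzWith.of_le_mul_dist fun v w => by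
    rw [Real.coe_toNNReal _ (by positivity), dist_eq_norm, dist_eq_norm,
      le_inv_mul_iff₀ (by positivity)]
    exact sq_mul_norm_sub_le_norm_energyFlux_sub hε v w

theorem surjective_energyFlux (hε : 0 < ε) : Function.Surjective (energyFlux ε : V → V) := by
  intro y
  obtain rfl | hy := eq_or_ne y 0
  · exact ⟨0, energyFlux_zero ε⟩
  have hy0 : 0 < ‖y‖ := norm_pos_iff.2 hy
  let profile (r : ℝ) : ℝ := (√(r ^ 2 + ε ^ 2) ^ ((1 : ℝ) - 2) + ε ^ 2) * r
  have hcont : Continuous profile := by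
    have hpos (r : ℝ) : √(r ^ 2 + ε ^ 2) ≠ 0 := by positivity
    have hsqrt : Continuous fun r : ℝ => √(r ^ 2 + ε ^ 2) := by fun_prop
    exact ((hsqrt.rpow_const fun r => Or.inl (hpos r)).add continuous_const).mul continuous_id
  have hrange : ‖y‖ ∈ Icc (profile 0) (profile (‖y‖ / ε ^ 2)) := by
    refine ⟨by simp [profile], ?_⟩
    calc ‖y‖ = ε ^ 2 * (‖y‖ / ε ^ 2) := by field_simp
      _ ≤ profile (‖y‖ / ε ^ 2) := by
        simp only [profile]
        gcongr
        exact le_add_of_nonneg_left (by positivity)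
  obtain ⟨r, ⟨hr, -⟩, hry⟩ := intermediate_value_Icc (by positivity) hcont.continuousOn hrange
  have hnorm : ‖(r / ‖y‖) • y‖ = r := by
    rw [norm_smul, Real.norm_of_nonneg (by positivity), div_mul_cancel₀ _ hy0.ne']
  refine ⟨(r / ‖y‖) • y, ?_⟩
  rw [energyFlux, powFlux, regNorm, hnorm, ← add_smul, smul_smul, ← mul_div_assoc]
  change (profile r / ‖y‖) • y = y
  rw [hry, div_self hy0.ne', one_smul]

theorem exists_monotone_powFlux_factorization (hε : 0 < ε) (hp : 1 ≤ p) :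
    ∃ G : V → V, LocallyLipschitz G ∧ (∀ y z, 0 ≤ ⟪G y - G z, y - z⟫) ∧
      ∀ v, G (energyFlux ε v) = powFlux ε p v := by
  obtain ⟨g, hg⟩ := (surjective_energyFlux (V := V) hε).hasRightInverse
  have hgLip := (antilipschitzWith_energyFlux hε).to_rightInverse hg
  have hleft := hg.leftInverse_of_injective (antilipschitzWith_energyFlux hε).injective
  refine ⟨powFlux ε p ∘ g, (contDiff_powFlux hε p).locallyLipschitz.comp hgLip.locallyLipschitz,
    fun y z => ?_, fun v => congrArg _ (hleft v)⟩
  simpa only [Function.comp_apply, hg y, hg z] using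
    inner_powFlux_sub_energyFlux_sub_nonneg hε hp (g y) (g z)

end Monotonicity

section AbsoluteContinuity

variable {X Y : Type*} [PseudoMetricSpace X] [PseudoMetricSpace Y]
  {V : Type*} [NormedAddCommGroup V] [InnerProductSpace ℝ V] {a b : ℝ}

theorem absolutelyContinuousOnInterval_of_dist_le {f : ℝ → X} {g : ℝ → Y}
    (hg : AbsolutelyContinuousOnInterval g a b)
    (hfg : ∀ x ∈ uIcc a b, ∀ y ∈ uIcc a b, dist (f x) (f y) ≤ dist (g x) (g y)) :
    AbsolutelyContinuousOnInterval f a b := by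
  rw [absolutelyContinuousOnInterval_iff] at hg ⊢
  intro η hη
  obtain ⟨δ, hδ, hsum⟩ := hg η hη
  refine ⟨δ, hδ, fun E hE hlen => lt_of_le_of_lt ?_ (hsum E hE hlen)⟩
  gcongr with i hi
  exact hfg _ (hE.1 i hi).1 _ (hE.1 i hi).2

theorem absolutelyContinuousOnInterval_norm {E : Type*} [SeminormedAddCommGroup E] {f : ℝ → E}
    (hf : AbsolutelyContinuousOnInterval f a b) :
    AbsolutelyContinuousOnInterval (fun x => ‖f x‖) a b :=
  absolutelyContinuousOnInterval_of_dist_le hf fun x _ y _ => by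
    simpa only [dist_eq_norm] using dist_norm_norm_le (f x) (f y)

theorem absolutelyContinuousOnInterval_inner {f g : ℝ → V}
    (hf : AbsolutelyContinuousOnInterval f a b) (hg : AbsolutelyContinuousOnInterval g a b) :
    AbsolutelyContinuousOnInterval (fun x => ⟪f x, g x⟫) a b := by
  have hnorm_sq {h : ℝ → V} (hh : AbsolutelyContinuousOnInterval h a b) :
      AbsolutelyContinuousOnInterval (fun x => ‖h x‖ * ‖h x‖) a b :=
    (absolutelyContinuousOnInterval_norm hh).fun_mul (absolutelyContinuousOnInterval_norm hh)
  simp only [real_inner_eq_norm_mul_self_add_norm_mul_self_sub_norm_sub_mul_self_div_two,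
    div_eq_inv_mul]
  exact (((hnorm_sq hf).fun_add (hnorm_sq hg)).fun_sub (hnorm_sq (hf.fun_sub hg))).const_mul _

theorem setIntegral_inner_deriv_add_inner_deriv (hab : a ≤ b) {f g f' g' : ℝ → V}
    (hf : AbsolutelyContinuousOnInterval f a b) (hg : AbsolutelyContinuousOnInterval g a b)
    (hf' : ∀ᵐ x ∂volume.restrict (Ioo a b), HasDerivAt f (f' x) x)
    (hg' : ∀ᵐ x ∂volume.restrict (Ioo a b), HasDerivAt g (g' x) x) :
    IntegrableOn (fun x => ⟪f x, g' x⟫ + ⟪f' x, g x⟫) (Ioo a b) ∧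
      ∫ x in Ioo a b, (⟪f x, g' x⟫ + ⟪f' x, g x⟫) = ⟪f b, g b⟫ - ⟪f a, g a⟫ := by
  have hac := absolutelyContinuousOnInterval_inner hf hg
  have hderiv : deriv (fun x => ⟪f x, g x⟫) =ᵐ[volume.restrict (Ioo a b)]
      fun x => ⟪f x, g' x⟫ + ⟪f' x, g x⟫ := by
    filter_upwards [hf', hg'] with x hfx hgx using (hfx.inner ℝ hgx).deriv
  refine ⟨Integrable.congr ?_ hderiv, ?_⟩
  · exact (intervalIntegrable_iff_integrableOn_Ioo_of_le hab).1 hac.intervalIntegrable_deriv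
  · rw [← integral_congr_ae hderiv, ← integral_Ioc_eq_integral_Ioo,
      ← intervalIntegral.integral_of_le hab, hac.integral_deriv_eq_sub]

theorem inner_deriv_nonneg_of_forall {f g : ℝ → V} {f' g' : V} {x : ℝ}
    (hf : HasDerivAt f f' x) (hg : HasDerivAt g g' x)
    (hmono : ∀ y, 0 ≤ ⟪f y - f x, g y - g x⟫) : 0 ≤ ⟪f', g'⟫ := by
  have hslope := (hasDerivAt_iff_tendsto_slope.1 hf).inner (𝕜 := ℝ)
    (hasDerivAt_iff_tendsto_slope.1 hg)
  refine ge_of_tendsto' hslope fun y => ?_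
  simp only [slope, vsub_eq_sub, real_inner_smul_left, real_inner_smul_right, ← mul_assoc]
  exact mul_nonneg (mul_self_nonneg _) (hmono y)

theorem ae_hasDerivAt_deriv_of_lipschitzOnWith {E : Type*} [NormedAddCommGroup E]
    [NormedSpace ℝ E] [FiniteDimensional ℝ E] {K : NNReal} {f : ℝ → E}
    (hf : LipschitzOnWith K f (Icc a b)) :
    ∀ᵐ x ∂volume.restrict (Ioo a b), HasDerivAt f (deriv f x) x := by
  rw [ae_restrict_iff' measurableSet_Ioo]
  filter_upwards [hf.ae_differentiableWithinAt_of_mem] with x hdiff hx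
  exact ((hdiff (Ioo_subset_Icc_self hx)).differentiableAt (Icc_mem_nhds hx.1 hx.2)).hasDerivAt

end AbsoluteContinuity

section Lebesgue

variable {α : Type*} [MeasurableSpace α] {μ : Measure α}

theorem integrable_inner_of_memLp_two {V : Type*} [NormedAddCommGroup V] [InnerProductSpace ℝ V]
    {f g : α → V} (hf : MemLp f 2 μ) (hg : MemLp g 2 μ) :
    Integrable (fun x => ⟪f x, g x⟫) μ :=
  memLp_one_iff_integrable.1 ((innerSL ℝ).memLp_of_bilin 1 hf hg)

theorem memLp_comp_of_ae_norm_le [IsFiniteMeasure μ] {E F : Type*} [NormedAddCommGroup E]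
    [ProperSpace E] [NormedAddCommGroup F] {f : α → E} {h : E → F} {C : ℝ} {q : ℝ≥0∞}
    (hh : Continuous h) (hf : AEStronglyMeasurable f μ) (hC : ∀ᵐ x ∂μ, ‖f x‖ ≤ C) :
    MemLp (h ∘ f) q μ := by
  obtain ⟨M, hM⟩ := (isCompact_closedBall (0 : E) C).exists_bound_of_continuousOn
    hh.continuousOn
  refine MemLp.of_bound (hh.comp_aestronglyMeasurable hf) M ?_
  filter_upwards [hC] with x hx using hM _ (mem_closedBall_zero_iff.2 hx)

theorem memLp_two_norm {E : Type*} [NormedAddCommGroup E] {g : α → E}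
    (hg : Integrable (fun x => ‖g x‖ ^ 2) μ) : MemLp (fun x => ‖g x‖) 2 μ := by
  have hmeas : AEStronglyMeasurable (fun x => ‖g x‖) μ := by
    simpa only [Function.comp_def, Real.sqrt_sq (norm_nonneg _)] using
      Real.continuous_sqrt.comp_aestronglyMeasurable hg.aestronglyMeasurable
  exact (memLp_two_iff_integrable_sq hmeas).2 hg

theorem integrable_norm_rpow_of_integrable_norm_sq [IsFiniteMeasure μ] {E : Type*}
    [NormedAddCommGroup E] {g : α → E} {p : ℝ} (hg : Integrable (fun x => ‖g x‖ ^ 2) μ)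
    (hp0 : 0 ≤ p) (hp2 : p ≤ 2) : Integrable (fun x => ‖g x‖ ^ p) μ := by
  have hp : ENNReal.ofReal p ≤ 2 := by
    rw [← ENNReal.ofReal_ofNat 2]
    exact ENNReal.ofReal_le_ofReal hp2
  simpa only [norm_norm, ENNReal.toReal_ofReal hp0] using
    ((memLp_two_norm hg).mono_exponent hp).integrable_norm_rpow'

theorem integrable_regNorm [IsFiniteMeasure μ] {E : Type*} [NormedAddCommGroup E] {g : α → E}
    (ε : ℝ) (hg : Integrable (fun x => ‖g x‖ ^ 2) μ) :
    Integrable (fun x => regNorm ε (g x)) μ := by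
  have hsq : Integrable (fun x => ‖g x‖ ^ 2 + ε ^ 2) μ := hg.add (integrable_const _)
  have hmeas : AEStronglyMeasurable (fun x => regNorm ε (g x)) μ :=
    Real.continuous_sqrt.comp_aestronglyMeasurable hsq.aestronglyMeasurable
  refine ((memLp_two_iff_integrable_sq hmeas).2 ?_).integrable one_le_two
  simpa only [regNorm_sq] using hsq

theorem memLp_energyFlux [IsFiniteMeasure μ] {V : Type*} [NormedAddCommGroup V]
    [InnerProductSpace ℝ V] {ε : ℝ} {q : ℝ≥0∞} {g : α → V} (hε : 0 < ε) (hg : MemLp g q μ) :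
    MemLp (fun x => energyFlux ε (g x)) q μ :=
  (MemLp.of_bound ((contDiff_powFlux hε 1).continuous.comp_aestronglyMeasurable hg.1) 1
    (.of_forall fun x => norm_powFlux_one_le hε (g x))).add (hg.const_smul (ε ^ 2))

theorem memLp_two_of_continuousOn_Icc {E : Type*} [NormedAddCommGroup E] {a b : ℝ}
    {f : ℝ → E} (hf : ContinuousOn f (Icc a b)) : MemLp f 2 (volume.restrict (Ioo a b)) := by
  obtain ⟨M, hM⟩ := isCompact_Icc.exists_bound_of_continuousOn hf
  refine MemLp.of_bound
    ((hf.mono Ioo_subset_Icc_self).aestronglyMeasurable measurableSet_Ioo) M ?_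
  filter_upwards [ae_restrict_mem measurableSet_Ioo] with x hx
    using hM x (Ioo_subset_Icc_self hx)

theorem eq_zero_of_forall_mul_add_sq_mul_nonneg {L C : ℝ}
    (h : ∀ t : ℝ, 0 ≤ t * L + t ^ 2 * C) : L = 0 := by
  have hdiscrim : discrim C L 0 ≤ 0 := discrim_le_zero fun t => by linarith [h t]
  rw [discrim, mul_zero, sub_zero] at hdiscrim
  exact pow_eq_zero_iff two_ne_zero |>.1 (le_antisymm hdiscrim (sq_nonneg L))

theorem integral_first_variation_eq_zero {e L Q : α → ℝ} {e' : ℝ → α → ℝ}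
    (he : Integrable e μ) (hL : Integrable L μ) (hQ : Integrable Q μ)
    (he' : ∀ t, Integrable (e' t) μ) (hexp : ∀ t x, e' t x ≤ e x + t * L x + t ^ 2 * Q x)
    (hmin : ∀ t, ∫ x, e x ∂μ ≤ ∫ x, e' t x ∂μ) : ∫ x, L x ∂μ = 0 := by
  refine eq_zero_of_forall_mul_add_sq_mul_nonneg (C := ∫ x, Q x ∂μ) fun t => ?_
  have hlinear : Integrable (fun x => e x + t * L x) μ := he.add (hL.const_mul t)
  have hupper := integral_mono (he' t) (hlinear.add (hQ.const_mul (t ^ 2))) (hexp t)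
  rw [integral_add' hlinear (hQ.const_mul _), integral_add he (hL.const_mul _),
    integral_const_mul, integral_const_mul] at hupper
  linarith [hmin t]

end Lebesgue

namespace InH1

variable {n : ℕ} {a b : ℝ} {v v' w w' : ℝ → EuclideanSpace ℝ (Fin n)}

theorem memLp_two (hw : InH1 a b w w') : MemLp w 2 (volume.restrict (Ioo a b)) :=
  memLp_two_of_continuousOn_Icc hw.1

theorem memLp_two_deriv (hw : InH1 a b w w')
    (hm : AEStronglyMeasurable w' (volume.restrict (Ioo a b))) :
    MemLp w' 2 (volume.restrict (Ioo a b)) :=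
  (memLp_two_iff_integrable_sq_norm hm).2 hw.2.1

theorem intervalIntegrable_deriv (hab : a ≤ b) (hw : InH1 a b w w')
    (hm : AEStronglyMeasurable w' (volume.restrict (Ioo a b))) :
    IntervalIntegrable w' volume a b :=
  (intervalIntegrable_iff_integrableOn_Ioo_of_le hab).2
    ((hw.memLp_two_deriv hm).integrable one_le_two)

theorem zero_of_eq_left (hw : ∀ x ∈ Icc a b, w x = w a) : InH1 a b w 0 := by
  refine ⟨continuousOn_const.congr hw, by simp, fun x hx y hy => ?_⟩
  simp [hw x hx, hw y hy]

-- If `w'` is not measurable, then at every `x` one of the integrals of `w'` over `[a, x]` and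
-- `[x, b]` is undefined, hence `0` by convention, and so is the integral over `[a, b]`.
theorem aestronglyMeasurable_or_zero (hab : a ≤ b) (hw : InH1 a b w w') :
    AEStronglyMeasurable w' (volume.restrict (Ioo a b)) ∨ InH1 a b w 0 := by
  by_cases hint : IntervalIntegrable w' volume a b
  · exact .inl
      ((intervalIntegrable_iff_integrableOn_Ioo_of_le hab).1 hint).aestronglyMeasurable
  have hconst {x y : ℝ} (hx : x ∈ Icc a b) (hy : y ∈ Icc a b)
      (hxy : ¬ IntervalIntegrable w' volume x y) : w y = w x := by
    rw [← sub_eq_zero, hw.2.2 x hx y hy, intervalIntegral.integral_undef hxy]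
  have ha := left_mem_Icc.2 hab
  have hb := right_mem_Icc.2 hab
  refine .inr (zero_of_eq_left fun x hx => ?_)
  by_cases hax : IntervalIntegrable w' volume a x
  · have hxb : ¬ IntervalIntegrable w' volume x b := fun h => hint (hax.trans h)
    rw [← hconst hx hb hxb, hconst ha hb hint]
  · exact hconst ha hx hax

theorem const_smul (hw : InH1 a b w w') (c : ℝ) :
    InH1 a b (fun x => c • w x) (fun x => c • w' x) := by
  refine ⟨hw.1.const_smul c, ?_, fun x hx y hy => ?_⟩
  · simp only [norm_smul, mul_pow]
    exact hw.2.1.const_mul (‖c‖ ^ 2)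
  · rw [← smul_sub, hw.2.2 x hx y hy, intervalIntegral.integral_smul]

theorem add (hab : a ≤ b) (hv : InH1 a b v v')
    (hvm : AEStronglyMeasurable v' (volume.restrict (Ioo a b))) (hw : InH1 a b w w')
    (hwm : AEStronglyMeasurable w' (volume.restrict (Ioo a b))) :
    InH1 a b (fun x => v x + w x) (fun x => v' x + w' x) := by
  refine ⟨hv.1.add hw.1,
    ((hv.memLp_two_deriv hvm).add (hw.memLp_two_deriv hwm)).integrable_norm_pow two_ne_zero,
    fun x hx y hy => ?_⟩
  have hsub : uIcc x y ⊆ uIcc a b := by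
    rw [uIcc_of_le hab]
    exact uIcc_subset_Icc hx hy
  rw [intervalIntegral.integral_add ((hv.intervalIntegrable_deriv hab hvm).mono_set hsub)
    ((hw.intervalIntegrable_deriv hab hwm).mono_set hsub), ← hv.2.2 x hx y hy,
    ← hw.2.2 x hx y hy]
  exact add_sub_add_comm _ _ _ _

theorem sub (hab : a ≤ b) (hv : InH1 a b v v')
    (hvm : AEStronglyMeasurable v' (volume.restrict (Ioo a b))) (hw : InH1 a b w w')
    (hwm : AEStronglyMeasurable w' (volume.restrict (Ioo a b))) :
    InH1 a b (fun x => v x - w x) (fun x => v' x - w' x) := by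
  simpa only [neg_one_smul, ← sub_eq_add_neg] using
    hv.add hab hvm (hw.const_smul (-1)) (hwm.const_smul (-1 : ℝ))

theorem primitive (hab : a ≤ b) (c : EuclideanSpace ℝ (Fin n))
    (hw : MemLp w 2 (volume.restrict (Ioo a b))) :
    InH1 a b (fun x => c + ∫ t in a..x, w t) w := by
  have hint : IntervalIntegrable w volume a b :=
    (intervalIntegrable_iff_integrableOn_Ioo_of_le hab).2 (hw.integrable one_le_two)
  have hleft {x : ℝ} (hx : x ∈ Icc a b) : IntervalIntegrable w volume a x :=
    hint.mono_set (by rw [uIcc_of_le hab]; exact uIcc_subset_Icc (left_mem_Icc.2 hab) hx)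
  refine ⟨continuousOn_const.add ?_, hw.integrable_norm_pow two_ne_zero, fun x hx y hy => ?_⟩
  · rw [← uIcc_of_le hab]
    exact intervalIntegral.continuousOn_primitive_interval' hint left_mem_uIcc
  · rw [add_sub_add_left_eq_sub, intervalIntegral.integral_interval_sub_left (hleft hy) (hleft hx)]

theorem exists_right_eq (hab : a ≤ b) (hw : MemLp w 2 (volume.restrict (Ioo a b)))
    (c : EuclideanSpace ℝ (Fin n)) : ∃ v, InH1 a b v w ∧ v b = c :=
  ⟨_, primitive hab (c - ∫ t in a..b, w t) hw, sub_add_cancel _ _⟩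

theorem eq_left_add_integral (hab : a ≤ b) (hw : InH1 a b w w') {x : ℝ} (hx : x ∈ Icc a b) :
    w x = w a + ∫ t in a..x, w' t := by
  rw [← hw.2.2 a (left_mem_Icc.2 hab) x hx, add_sub_cancel]

theorem ae_hasDerivAt (hab : a ≤ b) (hw : InH1 a b w w')
    (hm : AEStronglyMeasurable w' (volume.restrict (Ioo a b))) :
    ∀ᵐ x ∂volume.restrict (Ioo a b), HasDerivAt w (w' x) x := by
  rw [ae_restrict_iff' measurableSet_Ioo]
  filter_upwards [(hw.intervalIntegrable_deriv hab hm).ae_hasDerivAt_integral] with x hderiv hx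
  rw [uIcc_of_le hab] at hderiv
  refine ((hderiv (Ioo_subset_Icc_self hx) a (left_mem_Icc.2 hab)).const_add
    (w a)).congr_of_eventuallyEq ?_
  filter_upwards [Icc_mem_nhds hx.1 hx.2] with y hy using hw.eq_left_add_integral hab hy

theorem absolutelyContinuousOnInterval (hab : a ≤ b) (hw : InH1 a b w w')
    (hm : AEStronglyMeasurable w' (volume.restrict (Ioo a b))) :
    AbsolutelyContinuousOnInterval w a b := by
  have hint := (hw.intervalIntegrable_deriv hab hm).norm
  refine absolutelyContinuousOnInterval_of_dist_le
    (hint.absolutelyContinuousOnInterval_intervalIntegral left_mem_uIcc) fun x hx y hy => ?_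
  have hleft {z : ℝ} (hz : z ∈ uIcc a b) : IntervalIntegrable (fun t => ‖w' t‖) volume a z :=
    hint.mono_set (uIcc_subset_uIcc left_mem_uIcc hz)
  have hftc := hw.2.2 y (by rwa [← uIcc_of_le hab]) x (by rwa [← uIcc_of_le hab])
  rw [dist_eq_norm, Real.dist_eq, hftc,
    intervalIntegral.integral_interval_sub_left (hleft hx) (hleft hy)]
  exact intervalIntegral.norm_integral_le_abs_integral_norm

theorem exists_lipschitzOnWith (hw : InH1 a b w w') (hc : ContinuousOn w' (Icc a b)) :
    ∃ K, LipschitzOnWith K w (Icc a b) := by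
  obtain ⟨C, hC⟩ := isCompact_Icc.exists_bound_of_continuousOn hc
  refine ⟨C.toNNReal, LipschitzOnWith.of_dist_le_mul fun x hx y hy => ?_⟩
  rw [dist_eq_norm, Real.dist_eq, hw.2.2 y hy x hx]
  refine (intervalIntegral.norm_integral_le_of_norm_le_const fun t ht => hC t
    (uIcc_subset_Icc hy hx (uIoc_subset_uIcc ht))).trans ?_
  gcongr
  exact Real.le_coe_toNNReal C

theorem setIntegral_inner_deriv_add_inner_deriv (hab : a ≤ b) (hv : InH1 a b v v')
    (hvm : AEStronglyMeasurable v' (volume.restrict (Ioo a b))) (hw : InH1 a b w w')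
    (hwm : AEStronglyMeasurable w' (volume.restrict (Ioo a b))) :
    ∫ x in Ioo a b, (⟪v x, w' x⟫ + ⟪v' x, w x⟫) = ⟪v b, w b⟫ - ⟪v a, w a⟫ :=
  (_root_.setIntegral_inner_deriv_add_inner_deriv hab
    (hv.absolutelyContinuousOnInterval hab hvm) (hw.absolutelyContinuousOnInterval hab hwm)
    (hv.ae_hasDerivAt hab hvm) (hw.ae_hasDerivAt hab hwm)).2

-- Integrating by parts turns the integral into `-∫ ⟪(G ∘ W)', W'⟫`, and monotonicity of `G` makes
-- the pairing of the derivatives of `G ∘ W` and `W` nonnegative.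
theorem setIntegral_inner_comp_primitive_nonpos (hab : a ≤ b)
    {G : EuclideanSpace ℝ (Fin n) → EuclideanSpace ℝ (Fin n)} (hG : LocallyLipschitz G)
    (hmono : ∀ y z, 0 ≤ ⟪G y - G z, y - z⟫) {W : ℝ → EuclideanSpace ℝ (Fin n)}
    (hW : InH1 a b W w) (hw : InH1 a b w w')
    (hm : AEStronglyMeasurable w' (volume.restrict (Ioo a b)))
    (ha : G (W a) = 0) (hb : G (W b) = 0) :
    ∫ x in Ioo a b, ⟪G (W x), w' x⟫ ≤ 0 := by
  obtain ⟨K, hK⟩ := hW.exists_lipschitzOnWith hw.1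
  obtain ⟨L, hL⟩ := (hG.locallyLipschitzOn (s := W '' Icc a b)).exists_lipschitzOnWith_of_compact
    (isCompact_Icc.image_of_continuousOn hW.1)
  have hGW : LipschitzOnWith (L * K) (G ∘ W) (Icc a b) := hL.comp hK (mapsTo_image _ _)
  have hGW' := ae_hasDerivAt_deriv_of_lipschitzOnWith hGW
  have hGWac : AbsolutelyContinuousOnInterval (G ∘ W) a b :=
    LipschitzOnWith.absolutelyContinuousOnInterval (by rwa [uIcc_of_le hab])
  obtain ⟨hint, hparts⟩ := _root_.setIntegral_inner_deriv_add_inner_deriv hab hGWac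
    (hw.absolutelyContinuousOnInterval hab hm) hGW' (hw.ae_hasDerivAt hab hm)
  have hboundary : ∫ x in Ioo a b, (⟪G (W x), w' x⟫ + ⟪deriv (G ∘ W) x, w x⟫) = 0 := by
    simpa only [Function.comp_apply, ha, hb, inner_zero_left, sub_zero] using hparts
  rw [← hboundary]
  refine integral_mono_ae (integrable_inner_of_memLp_two
    (memLp_two_of_continuousOn_Icc hGW.continuousOn) (hw.memLp_two_deriv hm)) hint ?_
  filter_upwards [hGW', hW.ae_hasDerivAt hab hw.memLp_two.1] with x hGWx hWx
  exact le_add_of_nonneg_right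
    (inner_deriv_nonneg_of_forall hGWx hWx fun y => hmono (W y) (W x))

end InH1

section EnergyDensity

variable {E : Type*} [NormedAddCommGroup E] {V : Type*} [NormedAddCommGroup V]
  [InnerProductSpace ℝ V] {lam ε : ℝ}

/-- The integrand of the regularized energy, as a function of the residual `r = w - f` and of the
derivative `v = w'`. -/
def energyDensity (lam ε : ℝ) (r v : E) : ℝ :=
  1 / (2 * lam) * ‖r‖ ^ 2 + regNorm ε v + ε ^ 2 / 2 * ‖v‖ ^ 2

theorem energyDensity_zero_add_le (hlam : 0 ≤ lam) {r s : E} (hrs : ‖r‖ ≤ ‖s‖) (v : E) :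
    energyDensity lam ε r 0 + ε ^ 2 / 2 * ‖v‖ ^ 2 ≤ energyDensity lam ε s v := by
  rw [energyDensity, energyDensity, norm_zero, zero_pow two_ne_zero, mul_zero, add_zero]
  gcongr
  rw [regNorm, regNorm, norm_zero]
  gcongr
  exact norm_nonneg v

theorem energyDensity_add_smul_le (hε : 0 < ε) (r h v k : V) (t : ℝ) :
    energyDensity lam ε (r + t • h) (v + t • k) ≤ energyDensity lam ε r v
      + t * (⟪lam⁻¹ • r, h⟫ + ⟪energyFlux ε v, k⟫)
      + t ^ 2 * (1 / (2 * lam) * ‖h‖ ^ 2 + (1 / (2 * ε) + ε ^ 2 / 2) * ‖k‖ ^ 2) := by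
  simp only [energyDensity, energyFlux, inner_add_left, real_inner_smul_left, norm_add_smul_sq]
  linear_combination regNorm_add_smul_le hε v k t

theorem regEnergy_eq_setIntegral_energyDensity {n : ℕ} (lam ε a b : ℝ)
    (f w w' : ℝ → EuclideanSpace ℝ (Fin n)) :
    regEnergy lam ε a b f w w' = ∫ x in Ioo a b, energyDensity lam ε (w x - f x) (w' x) :=
  rfl

end EnergyDensity

/-- The primitive, vanishing at `a`, of the scaled residual `lam⁻¹ (u - f)`. Integrating the
Euler–Lagrange equation of the regularized energy identifies it with `energyFlux ε u'`. -/
def integratedResidual {n : ℕ} (lam a : ℝ) (f u : ℝ → EuclideanSpace ℝ (Fin n)) :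
    ℝ → EuclideanSpace ℝ (Fin n) :=
  fun x => ∫ t in a..x, lam⁻¹ • (u t - f t)

theorem integratedResidual_left {n : ℕ} (lam a : ℝ) (f u : ℝ → EuclideanSpace ℝ (Fin n)) :
    integratedResidual lam a f u a = 0 :=
  intervalIntegral.integral_same

namespace InH1

variable {n : ℕ} {a b : ℝ} {f w w' : ℝ → EuclideanSpace ℝ (Fin n)}

theorem integrableOn_energyDensity (lam ε : ℝ) (hf : MemLp f 2 (volume.restrict (Ioo a b)))
    (hw : InH1 a b w w') :
    IntegrableOn (fun x => energyDensity lam ε (w x - f x) (w' x)) (Ioo a b) :=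
  ((((hw.memLp_two.sub hf).integrable_norm_pow two_ne_zero).const_mul _).add
    (integrable_regNorm ε hw.2.1)).add (hw.2.1.const_mul _)

theorem memLp_two_residual (lam : ℝ) (hf : MemLp f 2 (volume.restrict (Ioo a b)))
    (hw : InH1 a b w w') :
    MemLp (fun x => lam⁻¹ • (w x - f x)) 2 (volume.restrict (Ioo a b)) :=
  (hw.memLp_two.sub hf).const_smul lam⁻¹

end InH1

theorem inH1_integratedResidual {n : ℕ} {lam a b : ℝ} {f u u' : ℝ → EuclideanSpace ℝ (Fin n)}
    (hab : a ≤ b) (hf : MemLp f 2 (volume.restrict (Ioo a b))) (hu : InH1 a b u u') :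
    InH1 a b (integratedResidual lam a f u) (fun x => lam⁻¹ • (u x - f x)) := by
  unfold integratedResidual
  simpa only [zero_add] using InH1.primitive hab 0 (hu.memLp_two_residual lam hf)

namespace IsMinimizerEps

variable {n : ℕ} {lam ε a b p : ℝ} {f f' u u' : ℝ → EuclideanSpace ℝ (Fin n)}

theorem deriv_ae_eq_zero (hlam : 0 ≤ lam) (hε : ε ≠ 0)
    (hf : MemLp f 2 (volume.restrict (Ioo a b))) (hu : IsMinimizerEps lam ε a b f u u')
    {v : ℝ → EuclideanSpace ℝ (Fin n)} (hv : InH1 a b v 0)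
    (hle : ∀ x ∈ Ioo a b, ‖v x - f x‖ ≤ ‖u x - f x‖) :
    u' =ᵐ[volume.restrict (Ioo a b)] 0 := by
  have hu_int := hu.1.integrableOn_energyDensity lam ε hf
  have hv_int := hv.integrableOn_energyDensity lam ε hf
  have hsq_int : IntegrableOn (fun x => ε ^ 2 / 2 * ‖u' x‖ ^ 2) (Ioo a b) :=
    hu.1.2.1.const_mul _
  have hcompare : regEnergy lam ε a b f v 0 + ∫ x in Ioo a b, ε ^ 2 / 2 * ‖u' x‖ ^ 2
      ≤ regEnergy lam ε a b f u u' := by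
    rw [regEnergy_eq_setIntegral_energyDensity, ← integral_add hv_int hsq_int]
    exact setIntegral_mono_on (hv_int.add hsq_int) hu_int measurableSet_Ioo fun x hx =>
      energyDensity_zero_add_le hlam (hle x hx) _
  have hzero : ∫ x in Ioo a b, ε ^ 2 / 2 * ‖u' x‖ ^ 2 = 0 :=
    le_antisymm (by linarith [hu.2 v 0 hv]) (integral_nonneg fun x => by positivity)
  rw [integral_eq_zero_iff_of_nonneg (fun x => by positivity) hsq_int] at hzero
  filter_upwards [hzero] with x hx
  simpa [hε] using hx

theorem aestronglyMeasurable_deriv (hab : a ≤ b) (hlam : 0 ≤ lam) (hε : ε ≠ 0)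
    (hf : MemLp f 2 (volume.restrict (Ioo a b))) (hu : IsMinimizerEps lam ε a b f u u') :
    AEStronglyMeasurable u' (volume.restrict (Ioo a b)) :=
  (hu.1.aestronglyMeasurable_or_zero hab).elim id fun hu0 =>
    aestronglyMeasurable_zero.congr
      (hu.deriv_ae_eq_zero hlam hε hf hu0 fun _ _ => le_rfl).symm

theorem euler_lagrange (hab : a ≤ b) (hε : 0 < ε)
    (hf : MemLp f 2 (volume.restrict (Ioo a b))) (hu : IsMinimizerEps lam ε a b f u u')
    (hum : AEStronglyMeasurable u' (volume.restrict (Ioo a b)))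
    {ψ ψ' : ℝ → EuclideanSpace ℝ (Fin n)} (hψ : InH1 a b ψ ψ')
    (hψm : AEStronglyMeasurable ψ' (volume.restrict (Ioo a b))) :
    ∫ x in Ioo a b, (⟪lam⁻¹ • (u x - f x), ψ x⟫ + ⟪energyFlux ε (u' x), ψ' x⟫) = 0 := by
  have hfirst : IntegrableOn
      (fun x => ⟪lam⁻¹ • (u x - f x), ψ x⟫ + ⟪energyFlux ε (u' x), ψ' x⟫) (Ioo a b) :=
    (integrable_inner_of_memLp_two (hu.1.memLp_two_residual lam hf) hψ.memLp_two).add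
      (integrable_inner_of_memLp_two (memLp_energyFlux hε (hu.1.memLp_two_deriv hum))
        (hψ.memLp_two_deriv hψm))
  have hsecond : IntegrableOn (fun x => 1 / (2 * lam) * ‖ψ x‖ ^ 2
      + (1 / (2 * ε) + ε ^ 2 / 2) * ‖ψ' x‖ ^ 2) (Ioo a b) :=
    ((hψ.memLp_two.integrable_norm_pow two_ne_zero).const_mul _).add (hψ.2.1.const_mul _)
  have hvariation (t : ℝ) : InH1 a b (fun x => u x + t • ψ x) (fun x => u' x + t • ψ' x) :=
    hu.1.add hab hum (hψ.const_smul t) (hψm.const_smul t)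
  refine integral_first_variation_eq_zero (hu.1.integrableOn_energyDensity lam ε hf) hfirst
    hsecond (fun t => (hvariation t).integrableOn_energyDensity lam ε hf) (fun t x => ?_)
    fun t => hu.2 _ _ (hvariation t)
  rw [add_sub_right_comm]
  exact energyDensity_add_smul_le hε _ _ _ _ t

-- Test the Euler–Lagrange equation with a primitive `ψ` of `energyFlux ε u' - W` normalized by
-- `ψ b = W b`: integrating by parts leaves `‖W b‖ ^ 2 + ∫ ‖energyFlux ε u' - W‖ ^ 2 = 0`.
theorem energyFlux_deriv_ae_eq (hab : a ≤ b) (hε : 0 < ε)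
    (hf : MemLp f 2 (volume.restrict (Ioo a b))) (hu : IsMinimizerEps lam ε a b f u u')
    (hum : AEStronglyMeasurable u' (volume.restrict (Ioo a b))) :
    (∀ᵐ x ∂volume.restrict (Ioo a b), energyFlux ε (u' x) = integratedResidual lam a f u x) ∧
      integratedResidual lam a f u b = 0 := by
  have hres := hu.1.memLp_two_residual lam hf
  have hW := inH1_integratedResidual (lam := lam) hab hf hu.1
  have hW_left := integratedResidual_left lam a f u
  set W := integratedResidual lam a f u
  have hdefect : MemLp (fun x => energyFlux ε (u' x) - W x) 2 (volume.restrict (Ioo a b)) :=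
    (memLp_energyFlux hε (hu.1.memLp_two_deriv hum)).sub hW.memLp_two
  obtain ⟨ψ, hψ, hψb⟩ := InH1.exists_right_eq hab hdefect (W b)
  have hparts := hW.setIntegral_inner_deriv_add_inner_deriv hab hres.1 hψ hdefect.1
  rw [hψb, hW_left, inner_zero_left, sub_zero, real_inner_self_eq_norm_sq] at hparts
  have hsum : ‖W b‖ ^ 2 + ∫ x in Ioo a b, ‖energyFlux ε (u' x) - W x‖ ^ 2 = 0 := by
    have hparts_int : IntegrableOn
        (fun x => ⟪W x, energyFlux ε (u' x) - W x⟫ + ⟪lam⁻¹ • (u x - f x), ψ x⟫) (Ioo a b) :=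
      (integrable_inner_of_memLp_two hW.memLp_two hdefect).add
        (integrable_inner_of_memLp_two hres hψ.memLp_two)
    rw [← hparts, ← integral_add hparts_int hψ.2.1,
      ← hu.euler_lagrange hab hε hf hum hψ hdefect.1]
    refine integral_congr_ae (.of_forall fun x => ?_)
    dsimp only
    rw [← real_inner_self_eq_norm_sq, inner_sub_left]
    ring
  have hint_nonneg : 0 ≤ ∫ x in Ioo a b, ‖energyFlux ε (u' x) - W x‖ ^ 2 :=
    integral_nonneg fun x => by positivity
  obtain ⟨hWb, hint⟩ := (add_eq_zero_iff_of_nonneg (sq_nonneg _) hint_nonneg).1 hsum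
  refine ⟨?_, by simpa using hWb⟩
  rw [integral_eq_zero_iff_of_nonneg (fun x => by positivity) hψ.2.1] at hint
  filter_upwards [hint] with x hx
  simpa [sub_eq_zero] using hx

theorem exists_ae_norm_deriv_le (hab : a ≤ b) (hε : 0 < ε)
    (hf : MemLp f 2 (volume.restrict (Ioo a b))) (hu : IsMinimizerEps lam ε a b f u u')
    (hum : AEStronglyMeasurable u' (volume.restrict (Ioo a b))) :
    ∃ C, ∀ᵐ x ∂volume.restrict (Ioo a b), ‖u' x‖ ≤ C := by
  obtain ⟨M, hM⟩ := isCompact_Icc.exists_bound_of_continuousOn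
    (inH1_integratedResidual (lam := lam) hab hf hu.1).1
  refine ⟨M / ε ^ 2, ?_⟩
  filter_upwards [(hu.energyFlux_deriv_ae_eq hab hε hf hum).1,
    ae_restrict_mem measurableSet_Ioo] with x hx hxI
  have hflux := sq_mul_norm_sub_le_norm_energyFlux_sub hε (u' x) 0
  rw [energyFlux_zero, sub_zero, sub_zero, hx] at hflux
  rw [le_div_iff₀' (by positivity)]
  exact hflux.trans (hM x (Ioo_subset_Icc_self hxI))

theorem setIntegral_inner_powFlux_sub_nonpos (hab : a ≤ b) (hlam : 0 < lam) (hε : 0 < ε)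
    (hp : 1 ≤ p) (hf : InH1 a b f f')
    (hfm : AEStronglyMeasurable f' (volume.restrict (Ioo a b)))
    (hu : IsMinimizerEps lam ε a b f u u')
    (hum : AEStronglyMeasurable u' (volume.restrict (Ioo a b))) :
    ∫ x in Ioo a b, ⟪powFlux ε p (u' x), u' x - f' x⟫ ≤ 0 := by
  obtain ⟨G, hG, hmono, hGF⟩ :=
    exists_monotone_powFlux_factorization (V := EuclideanSpace ℝ (Fin n)) hε hp
  have hG0 : G 0 = 0 := by simpa only [energyFlux_zero, powFlux_zero] using hGF 0
  obtain ⟨hflux, hright⟩ := hu.energyFlux_deriv_ae_eq hab hε hf.memLp_two hum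
  have hsign := InH1.setIntegral_inner_comp_primitive_nonpos hab hG hmono
    (inH1_integratedResidual (lam := lam) hab hf.memLp_two hu.1)
    ((hu.1.sub hab hum hf hfm).const_smul lam⁻¹) ((hum.sub hfm).const_smul lam⁻¹)
    (by rw [integratedResidual_left, hG0]) (by rw [hright, hG0])
  simp only [real_inner_smul_right, integral_const_mul] at hsign
  refine le_of_eq_of_le (integral_congr_ae ?_)
    (nonpos_of_mul_nonpos_right hsign (inv_pos.2 hlam))
  filter_upwards [hflux] with x hx
  rw [← hx, hGF]

theorem setIntegral_inner_powFlux_deriv_le (hab : a ≤ b) (hlam : 0 < lam) (hε : 0 < ε)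
    (hp : 1 ≤ p) (hf : InH1 a b f f') (hu : IsMinimizerEps lam ε a b f u u') :
    IntegrableOn (fun x => ⟪powFlux ε p (u' x), f' x⟫) (Ioo a b) ∧
      ∫ x in Ioo a b, ⟪powFlux ε p (u' x), u' x⟫
        ≤ ∫ x in Ioo a b, ⟪powFlux ε p (u' x), f' x⟫ := by
  have hum := hu.aestronglyMeasurable_deriv hab hlam.le hε.ne' hf.memLp_two
  obtain hfm | hf0 := hf.aestronglyMeasurable_or_zero hab
  · obtain ⟨C, hC⟩ := hu.exists_ae_norm_deriv_le hab hε hf.memLp_two hum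
    have hflux : MemLp (fun x => powFlux ε p (u' x)) 2 (volume.restrict (Ioo a b)) :=
      memLp_comp_of_ae_norm_le (h := powFlux ε p) (contDiff_powFlux hε p).continuous hum hC
    have hu_int := integrable_inner_of_memLp_two hflux (hu.1.memLp_two_deriv hum)
    have hf_int := integrable_inner_of_memLp_two hflux (hf.memLp_two_deriv hfm)
    refine ⟨hf_int, ?_⟩
    rw [← sub_nonpos, ← integral_sub hu_int hf_int]
    simpa only [inner_sub_right] using
      hu.setIntegral_inner_powFlux_sub_nonpos hab hlam hε hp hf hfm hum
  · have hu0 := hu.deriv_ae_eq_zero hlam.le hε.ne' hf.memLp_two hf0 fun x _ => by simp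
    have hzero (g : ℝ → EuclideanSpace ℝ (Fin n)) :
        (fun x => ⟪powFlux ε p (u' x), g x⟫) =ᵐ[volume.restrict (Ioo a b)] 0 := by
      filter_upwards [hu0] with x hx
      rw [hx, Pi.zero_apply, powFlux_zero, inner_zero_left, Pi.zero_apply]
    refine ⟨(integrable_zero _ _ _).congr (hzero f').symm, ?_⟩
    rw [integral_congr_ae (hzero u'), integral_congr_ae (hzero f')]

theorem integrableOn_regNorm_deriv_rpow (hab : a ≤ b) (hlam : 0 ≤ lam) (hε : 0 < ε) (p : ℝ)
    (hf : MemLp f 2 (volume.restrict (Ioo a b))) (hu : IsMinimizerEps lam ε a b f u u') :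
    IntegrableOn (fun x => regNorm ε (u' x) ^ p) (Ioo a b) := by
  have hum := hu.aestronglyMeasurable_deriv hab hlam hε.ne' hf
  obtain ⟨C, hC⟩ := hu.exists_ae_norm_deriv_le hab hε hf hum
  have hcont : Continuous fun v : EuclideanSpace ℝ (Fin n) => regNorm ε v ^ p :=
    (contDiff_regNorm hε).continuous.rpow_const fun v => .inl (regNorm_pos hε v).ne'
  exact memLp_one_iff_integrable.1 (memLp_comp_of_ae_norm_le hcont hum hC)

end IsMinimizerEps

theorem minimizerEps_weighted_gradient_estimates_general {n : ℕ} {a b lam ε p : ℝ}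
    {f f' u u' : ℝ → EuclideanSpace ℝ (Fin n)} (hab : a ≤ b) (hlam : 0 < lam) (hε : 0 < ε)
    (hp : 1 ≤ p) (hf : InH1 a b f f') (hu : IsMinimizerEps lam ε a b f u u') :
    (∫ x in Ioo a b, regNorm ε (u' x) ^ (p - 2) * ‖u' x‖ ^ 2
      ≤ ∫ x in Ioo a b, regNorm ε (u' x) ^ (p - 2) * ⟪u' x, f' x⟫) ∧
    (IntegrableOn (fun x => ‖f' x‖ ^ p) (Ioo a b) →
      ∫ x in Ioo a b, regNorm ε (u' x) ^ (p - 2) * ‖u' x‖ ^ 2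
        ≤ (p - 1) / p * (∫ x in Ioo a b, regNorm ε (u' x) ^ p)
          + 1 / p * ∫ x in Ioo a b, ‖f' x‖ ^ p) := by
  obtain ⟨hint, hle⟩ := hu.setIntegral_inner_powFlux_deriv_le hab hlam hε hp hf
  have hreg := hu.integrableOn_regNorm_deriv_rpow hab hlam.le hε p hf.memLp_two
  have hfirst : ∫ x in Ioo a b, regNorm ε (u' x) ^ (p - 2) * ‖u' x‖ ^ 2
      ≤ ∫ x in Ioo a b, ⟪powFlux ε p (u' x), f' x⟫ := by
    simpa only [powFlux, real_inner_smul_left, real_inner_self_eq_norm_sq] using hle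
  refine ⟨by simpa only [powFlux, real_inner_smul_left] using hfirst, fun hf'p => ?_⟩
  rw [← integral_const_mul, ← integral_const_mul,
    ← integral_add (hreg.const_mul _) (hf'p.const_mul _)]
  exact hfirst.trans (integral_mono hint ((hreg.const_mul _).add (hf'p.const_mul _))
    fun x => inner_powFlux_le hε hp (u' x) (f' x))

open scoped RealInnerProductSpace in
/-- the key integral identity-type estimates for the minimizer of `E_ε`:
`∫_I |u'|_ε^{p−2} ‖u'‖² ≤ ∫_I |u'|_ε^{p−2} (u' ⬝ f')` and consequently
`∫_I |u'|_ε^{p−2} ‖u'‖² ≤ ((p−1)/p) ∫_I |u'|_ε^p + (1/p) ∫_I ‖f'‖^p`. -/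
theorem minimizerEps_weighted_gradient_estimates
    {n : ℕ} (hn : 1 ≤ n) (a b : ℝ) (hab : a < b) (lam : ℝ) (hlam : 0 < lam)
    (ε : ℝ) (hε : 0 < ε)
    (f f' : ℝ → EuclideanSpace ℝ (Fin n)) (hf : InH1 a b f f')
    (u u' : ℝ → EuclideanSpace ℝ (Fin n)) (hu : IsMinimizerEps lam ε a b f u u')
    (p : ℝ) (hp1 : 1 ≤ p) (hp2 : p ≤ 2) :
    ((∫ x in Set.Ioo a b, Real.sqrt (‖u' x‖ ^ 2 + ε ^ 2) ^ (p - 2) * ‖u' x‖ ^ 2)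
      ≤ ∫ x in Set.Ioo a b, Real.sqrt (‖u' x‖ ^ 2 + ε ^ 2) ^ (p - 2) * ⟪u' x, f' x⟫)
    ∧
    ((∫ x in Set.Ioo a b, Real.sqrt (‖u' x‖ ^ 2 + ε ^ 2) ^ (p - 2) * ‖u' x‖ ^ 2)
      ≤ ((p - 1) / p) * (∫ x in Set.Ioo a b, Real.sqrt (‖u' x‖ ^ 2 + ε ^ 2) ^ p)
        + (1 / p) * ∫ x in Set.Ioo a b, ‖f' x‖ ^ p) := by
  have hgeneral := minimizerEps_weighted_gradient_estimates_general hab.le hlam hε hp1 hf hu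
  exact ⟨hgeneral.1, hgeneral.2
    (integrable_norm_rpow_of_integrable_norm_sq hf.2.1 (zero_le_one.trans hp1) hp2)⟩
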